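/- For all nonnegative integers n and b, ∫₀^(π/2) cos^(2n+1)(x) · x^(2b)/(2b)! dx = 4^n/((2n+1)·C(2n,n)) · Σ_{n < m₁ < ... < m_b} 1/((2m₁+1)² ⋯ (2m_b+1)²), where the empty sum (b = 0) equals 1. -/

import Mathlib

open Real

/-- `∑_{n < m₁ < ⋯ < m_b} 1/((2m₁+1)² ⋯ (2m_b+1)²)`; equals `1` when `b = 0`. -/
noncomputable def tTail (b n : ℕ) : ℝ :=
  ∑' f : {f : Fin b → ℕ // StrictMono f ∧ ∀ i, n < f i},
    ∏ i, 1 / (2 * (f.1 i : ℝ) + 1) ^ 2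

/-- normalising constant -/
noncomputable def cC (n : ℕ) : ℝ := 4 ^ n / ((2 * (n : ℝ) + 1) * (Nat.choose (2 * n) n : ℝ))

/-- the moment integral -/
noncomputable def cI (n b : ℕ) : ℝ :=
  ∫ x in (0:ℝ)..(π / 2), Real.cos x ^ (2 * n + 1) * (x ^ (2 * b) / (Nat.factorial (2 * b)))

lemma cC_pos (n : ℕ) : 0 < cC n := by
  have h : 0 < (Nat.choose (2 * n) n : ℝ) := by
    exact_mod_cast Nat.choose_pos (by omega)
  unfold cC
  positivity

lemma cC_succ (n : ℕ) : (2 * (n:ℝ) + 3) * cC (n + 1) = (2 * n + 2) * cC n := by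
  have h : 0 < (Nat.choose (2 * n) n : ℝ) := by
    exact_mod_cast Nat.choose_pos (by omega)
  have h' : 0 < (Nat.choose (2 * (n + 1)) (n + 1) : ℝ) := by
    exact_mod_cast Nat.choose_pos (by omega)
  have e := Nat.succ_mul_centralBinom_succ n
  rw [Nat.centralBinom, Nat.centralBinom] at e
  have e' : ((n:ℝ) + 1) * (Nat.choose (2 * (n + 1)) (n + 1) : ℝ)
      = 2 * (2 * n + 1) * (Nat.choose (2 * n) n : ℝ) := by exact_mod_cast e
  unfold cC
  generalize (Nat.choose (2 * (n + 1)) (n + 1) : ℝ) = A at *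
  generalize (Nat.choose (2 * n) n : ℝ) = B at *
  have h3 : (2 * (n:ℝ) + 1) ≠ 0 := by positivity
  have h4 : (2 * ((n + 1 : ℕ):ℝ) + 1) ≠ 0 := by positivity
  rw [mul_div_assoc', mul_div_assoc', div_eq_div_iff (by positivity) (by positivity)]
  push_cast
  rw [pow_succ]
  linear_combination (-2 * (4:ℝ) ^ n * (2 * n + 3)) * e'

lemma cI_zero (n : ℕ) : cI n 0 = cC n := by
  induction n with
  | zero => simp [cI, cC]
  | succ n ih =>
    have h := cC_succ n
    have e : cI (n + 1) 0 = (2 * n + 2) / (2 * n + 3) * cI n 0 := by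
      have := integral_cos_pow (a := 0) (b := π / 2) (n := 2 * n + 1)
      simp only [cI, mul_zero, pow_zero, Nat.factorial_zero, Nat.cast_one, div_one, mul_one]
      rw [show 2 * (n + 1) + 1 = 2 * n + 1 + 2 by ring, this]
      simp
      left
      congr 1 <;> ring
    rw [e, ih]
    field_simp
    linarith

lemma cI_rec (n b : ℕ) : (2 * (n:ℝ) + 3) * (2 * n + 2) * cI n (b + 1)
    - (2 * (n:ℝ) + 3) ^ 2 * cI (n + 1) (b + 1) = cI (n + 1) b := by
  have key : ∫ x in (0:ℝ)..(π / 2),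
      ((2 * (n:ℝ) + 3) * (2 * n + 2) *
        (Real.cos x ^ (2 * n + 1) * (x ^ (2 * (b + 1)) / (Nat.factorial (2 * (b + 1)))))
      - (2 * (n:ℝ) + 3) ^ 2 *
        (Real.cos x ^ (2 * (n + 1) + 1) * (x ^ (2 * (b + 1)) / (Nat.factorial (2 * (b + 1)))))
      - Real.cos x ^ (2 * (n + 1) + 1) * (x ^ (2 * b) / (Nat.factorial (2 * b)))) = 0 := by
    rw [intervalIntegral.integral_eq_sub_of_hasDerivAt
      (f := fun x => -(2 * (n:ℝ) + 3) * (Real.cos x ^ (2 * n + 2) * Real.sin x) *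
          (x ^ (2 * b + 2) / (Nat.factorial (2 * b + 2)))
        - Real.cos x ^ (2 * n + 3) * (x ^ (2 * b + 1) / (Nat.factorial (2 * b + 1))))]
    · simp
    · intro x _
      have hc := Real.hasDerivAt_cos x
      have hs := Real.hasDerivAt_sin x
      have hp2 := (hasDerivAt_pow (2 * b + 2) x).div_const ((Nat.factorial (2 * b + 2) : ℝ))
      have hp1 := (hasDerivAt_pow (2 * b + 1) x).div_const ((Nat.factorial (2 * b + 1) : ℝ))
      have H := ((((hc.pow (2 * n + 2)).mul hs).const_mul (-(2 * (n:ℝ) + 3))).mul hp2).sub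
        ((hc.pow (2 * n + 3)).mul hp1)
      refine H.congr_deriv ?_
      have f1 : (Nat.factorial (2 * b + 2) : ℝ) = (2 * b + 2) * Nat.factorial (2 * b + 1) := by
        rw [Nat.factorial_succ]; push_cast; ring
      have f0 : (Nat.factorial (2 * b + 1) : ℝ) = (2 * b + 1) * Nat.factorial (2 * b) := by
        rw [Nat.factorial_succ]; push_cast; ring
      have hF : (Nat.factorial (2 * b) : ℝ) ≠ 0 := by positivity
      simp only [show 2 * (b + 1) = 2 * b + 2 by ring, show 2 * (n + 1) + 1 = 2 * n + 3 by ring,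
        show 2 * n + 2 - 1 = 2 * n + 1 by omega, show 2 * n + 3 - 1 = 2 * n + 2 by omega,
        show 2 * b + 2 - 1 = 2 * b + 1 by omega, show 2 * b + 1 - 1 = 2 * b by omega,
        Pi.pow_apply, Pi.mul_apply]
      rw [f1, f0]
      generalize (Nat.factorial (2 * b) : ℝ) = F at *
      have hs2 : Real.sin x ^ 2 = 1 - Real.cos x ^ 2 := Real.sin_sq x
      push_cast
      field_simp
      ring_nf
      simp only [hs2]
      ring
    · apply Continuous.intervalIntegrable
      fun_prop
  have hi : ∀ n b : ℕ, IntervalIntegrable (fun x : ℝ => Real.cos x ^ (2 * n + 1) *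
      (x ^ (2 * b) / (Nat.factorial (2 * b)))) MeasureTheory.volume 0 (π / 2) := by
    intro n b
    apply Continuous.intervalIntegrable
    fun_prop
  rw [intervalIntegral.integral_sub (((hi _ _).const_mul _).sub ((hi _ _).const_mul _)) (hi _ _),
    intervalIntegral.integral_sub ((hi _ _).const_mul _) ((hi _ _).const_mul _),
    intervalIntegral.integral_const_mul, intervalIntegral.integral_const_mul] at key
  unfold cI
  linarith

lemma cI_nonneg (n b : ℕ) : 0 ≤ cI n b := by
  unfold cI
  apply intervalIntegral.integral_nonneg (by positivity)
  intro x hx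
  have : 0 ≤ Real.cos x := Real.cos_nonneg_of_mem_Icc ⟨by linarith [hx.1, Real.pi_pos], hx.2⟩
  have := hx.1
  positivity

lemma cI_le (n b : ℕ) : cI n (b + 1) ≤ (π / 2) ^ (2 * b + 2) * (cI n 0 - cI (n + 1) 0) := by
  unfold cI
  rw [← intervalIntegral.integral_sub, ← intervalIntegral.integral_const_mul]
  · apply intervalIntegral.integral_mono_on (by positivity)
    · apply Continuous.intervalIntegrable
      fun_prop
    · apply Continuous.intervalIntegrable
      fun_prop
    · intro x hx
      have hc : 0 ≤ Real.cos x :=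
        Real.cos_nonneg_of_mem_Icc ⟨by linarith [hx.1, Real.pi_pos], hx.2⟩
      have h0 := hx.1
      have hpi := Real.pi_pos
      have hs : x ≤ π / 2 * Real.sin x := by
        have := Real.mul_le_sin hx.1 hx.2
        calc x = π / 2 * (2 / π * x) := by field_simp
          _ ≤ _ := by gcongr
      have h1 : x ^ (2 * (b + 1)) / (Nat.factorial (2 * (b + 1))) ≤ x ^ (2 * (b + 1)) := by
        apply div_le_self (by positivity)
        exact_mod_cast Nat.one_le_iff_ne_zero.2 (Nat.factorial_ne_zero _)
      have h2 : x ^ (2 * (b + 1)) ≤ (π / 2) ^ (2 * b + 2) * Real.sin x ^ 2 := by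
        calc x ^ (2 * (b + 1)) = x ^ (2 * b) * x ^ 2 := by ring
          _ ≤ (π / 2) ^ (2 * b) * (π / 2 * Real.sin x) ^ 2 := by
            gcongr
            exact hx.2
          _ = _ := by ring
      calc _ ≤ Real.cos x ^ (2 * n + 1) * ((π / 2) ^ (2 * b + 2) * Real.sin x ^ 2) := by
            gcongr
            exact h1.trans h2
        _ = _ := by
          rw [Real.sin_sq]
          simp
          ring
  · apply Continuous.intervalIntegrable
    fun_prop
  · apply Continuous.intervalIntegrable
    fun_prop

/-- normalised moments -/
noncomputable def cJ (n b : ℕ) : ℝ := cI n b / cC n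

lemma cJ_nonneg (n b : ℕ) : 0 ≤ cJ n b := div_nonneg (cI_nonneg n b) (cC_pos n).le

lemma cJ_rec (n b : ℕ) :
    cJ n (b + 1) - cJ (n + 1) (b + 1) = 1 / (2 * (n:ℝ) + 3) ^ 2 * cJ (n + 1) b := by
  have h := cI_rec n b
  have h1 := cC_pos n
  have h2 := cC_pos (n + 1)
  have h3 := cC_succ n
  have h4 : cC n = (2 * (n:ℝ) + 3) * cC (n + 1) / (2 * n + 2) := by
    field_simp
    linarith
  unfold cJ
  rw [h4, ← h]
  field_simp

lemma cJ_le (n b : ℕ) : cJ n (b + 1) ≤ (π / 2) ^ (2 * b + 2) * (1 / ((n:ℝ) + 1)) := by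
  have h := cI_le n b
  have h1 := cC_pos n
  rw [cI_zero, cI_zero] at h
  have h3 := cC_succ n
  have h4 : cC (n + 1) = (2 * n + 2) * cC n / (2 * (n:ℝ) + 3) := by
    field_simp
    linarith
  unfold cJ
  rw [div_le_iff₀ h1]
  refine h.trans ?_
  rw [mul_assoc]
  gcongr
  rw [h4, ← sub_nonneg]
  have : 1 / ((n:ℝ) + 1) * cC n - (cC n - (2 * n + 2) * cC n / (2 * (n:ℝ) + 3))
    = cC n * (n + 2) / ((n + 1) * (2 * n + 3)) := by
    field_simp
    ring
  rw [this]
  positivity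

lemma cJ_tendsto (b n : ℕ) :
    Filter.Tendsto (fun k => cJ (n + k) (b + 1)) Filter.atTop (nhds 0) := by
  have h1 : Filter.Tendsto (fun k => cJ k (b + 1)) Filter.atTop (nhds 0) := by
    refine squeeze_zero (fun k => cJ_nonneg _ _) (fun k => cJ_le k b) ?_
    simpa using (tendsto_one_div_add_atTop_nhds_zero_nat (𝕜 := ℝ)).const_mul
      ((π / 2) ^ (2 * b + 2))
  have := (Filter.tendsto_add_atTop_iff_nat n).2 h1
  simpa [add_comm] using this

lemma cJ_hasSum (n b : ℕ) :
    HasSum (fun k : ℕ => 1 / (2 * ((n + 1 + k : ℕ):ℝ) + 1) ^ 2 * cJ (n + 1 + k) b)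
      (cJ n (b + 1)) := by
  rw [hasSum_iff_tendsto_nat_of_nonneg
    (fun k => mul_nonneg (by positivity) (cJ_nonneg _ _))]
  have e : ∀ K : ℕ, ∑ k ∈ Finset.range K,
      1 / (2 * ((n + 1 + k : ℕ):ℝ) + 1) ^ 2 * cJ (n + 1 + k) b
      = cJ n (b + 1) - cJ (n + K) (b + 1) := by
    intro K
    induction K with
    | zero => simp
    | succ K ih =>
      rw [Finset.sum_range_succ, ih]
      have := cJ_rec (n + K) b
      rw [show n + 1 + K = n + K + 1 by ring, show n + (K + 1) = n + K + 1 by ring,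
        show (2 * ((n + K + 1 : ℕ):ℝ) + 1) = 2 * ((n + K : ℕ):ℝ) + 3 by push_cast; ring, ← this]
      ring
  simp only [e]
  simpa using (cJ_tendsto b n).const_sub (cJ n (b + 1))

lemma tSigma_ext (b n : ℕ)
    (p q : Σ k : ℕ, {f : Fin b → ℕ // StrictMono f ∧ ∀ i, n + 1 + k < f i})
    (h : p.1 = q.1) (h' : p.2.1 = q.2.1) : p = q := by
  obtain ⟨k, f, hf⟩ := p
  obtain ⟨l, g, hg⟩ := q
  simp only at h h'
  subst h
  subst h'
  rfl

/-- split off the smallest index -/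
def tEquiv (b n : ℕ) :
    (Σ k : ℕ, {f : Fin b → ℕ // StrictMono f ∧ ∀ i, n + 1 + k < f i}) ≃
      {f : Fin (b + 1) → ℕ // StrictMono f ∧ ∀ i, n < f i} where
  toFun p := ⟨Fin.cons (n + 1 + p.1) p.2.1, by
    obtain ⟨k, f, hf, hk⟩ := p
    refine ⟨?_, ?_⟩
    · intro i j hij
      induction i using Fin.cases with
      | zero =>
        induction j using Fin.cases with
        | zero => exact absurd hij (lt_irrefl _)
        | succ j => simpa using hk j
      | succ i =>
        induction j using Fin.cases with
        | zero => exact absurd hij (by simp)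
        | succ j => simpa using hf (Fin.succ_lt_succ_iff.1 hij)
    · intro i
      induction i using Fin.cases with
      | zero => simp; omega
      | succ i =>
        have := hk i
        simp
        omega⟩
  invFun f := ⟨f.1 0 - (n + 1), ⟨fun i => f.1 i.succ, by
    refine ⟨fun i j hij => f.2.1 (Fin.succ_lt_succ_iff.2 hij), fun i => ?_⟩
    have h0 := f.2.2 0
    have := f.2.1 (Fin.succ_pos i)
    change n + 1 + (f.1 0 - (n + 1)) < f.1 i.succ
    omega⟩⟩
  left_inv p := by
    obtain ⟨k, f, hf, hk⟩ := p
    apply tSigma_ext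
    · simp
    · funext i
      simp
  right_inv f := by
    apply Subtype.ext
    have h0 := f.2.2 0
    funext i
    induction i using Fin.cases with
    | zero => simp; omega
    | succ i => simp

lemma tTail_hasSum (b : ℕ) : ∀ n : ℕ,
    HasSum (fun f : {f : Fin b → ℕ // StrictMono f ∧ ∀ i, n < f i} =>
      ∏ i, 1 / (2 * (f.1 i : ℝ) + 1) ^ 2) (cJ n b) := by
  induction b with
  | zero =>
    intro n
    have h : cJ n 0 = 1 := by
      unfold cJ
      rw [cI_zero, div_self (cC_pos n).ne']
    rw [h]
    have : Unique {f : Fin 0 → ℕ // StrictMono f ∧ ∀ i, n < f i} :=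
      { default := ⟨fun i => i.elim0, fun i => i.elim0, fun i => i.elim0⟩
        uniq := fun f => Subtype.ext (Subsingleton.elim _ _) }
    simpa using hasSum_unique (fun f : {f : Fin 0 → ℕ // StrictMono f ∧ ∀ i, n < f i} => (1:ℝ))
  | succ b ih =>
    intro n
    rw [← (tEquiv b n).hasSum_iff]
    have hfib : ∀ k : ℕ, HasSum (fun f : {f : Fin b → ℕ // StrictMono f ∧ ∀ i, n + 1 + k < f i} =>
        ((fun f : {f : Fin (b + 1) → ℕ // StrictMono f ∧ ∀ i, n < f i} =>
          ∏ i, 1 / (2 * (f.1 i : ℝ) + 1) ^ 2) ∘ (tEquiv b n)) ⟨k, f⟩)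
        (1 / (2 * ((n + 1 + k : ℕ):ℝ) + 1) ^ 2 * cJ (n + 1 + k) b) := by
      intro k
      have hm := (ih (n + 1 + k)).mul_left (1 / (2 * ((n + 1 + k : ℕ):ℝ) + 1) ^ 2)
      refine (congrArg (fun g => HasSum g _) (funext fun f => ?_)).mp hm
      simp only [Function.comp_apply]
      conv_rhs => rw [Fin.prod_univ_succ]
      simp [tEquiv]
    refine HasSum.sigma_of_hasSum (cJ_hasSum n b) hfib ?_
    rw [summable_sigma_of_nonneg]
    · refine ⟨fun k => (hfib k).summable, ?_⟩
      exact (cJ_hasSum n b).summable.congr fun k => (hfib k).tsum_eq.symm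
    · intro p
      exact Finset.prod_nonneg fun i _ => by positivity

theorem cos_odd_moments (n b : ℕ) :
    (∫ x in (0:ℝ)..(π / 2), Real.cos x ^ (2 * n + 1) *
        (x ^ (2 * b) / (Nat.factorial (2 * b)))) =
      4 ^ n / ((2 * (n : ℝ) + 1) * (Nat.choose (2 * n) n : ℝ)) * tTail b n := by
  have h : tTail b n = cJ n b := (tTail_hasSum b n).tsum_eq
  rw [h]
  change cI n b = cC n * (cI n b / cC n)
  rw [mul_div_cancel₀ _ (cC_pos n).ne']
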